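/- Sharpness of the phase transition (Duminil-Copin–Tassion): for every dimension d ≥ 2 and every p ∈ (0,1) with p < p_c(ℤ^d), there exists a constant c = c(p) > 0 such that ℙ_p[0 ↔ ∂Λ_n] ≤ exp(−c·n) for all integers n ≥ 1. -/

import Mathlib

open MeasureTheory

namespace Perc

/-- Vertices of `ℤ^d`. -/
abbrev Vertex (d : ℕ) := Fin d → ℤ

/-- Nearest-neighbour adjacency in `ℤ^d`: `‖x − y‖₁ = 1`. -/
def adj {d : ℕ} (x y : Vertex d) : Prop :=
  (∑ i, (x i - y i).natAbs) = 1

/-- The unordered pair `e` is a nearest-neighbour edge of `ℤ^d`. -/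
def IsEdge {d : ℕ} (e : Sym2 (Vertex d)) : Prop :=
  ∃ x y : Vertex d, adj x y ∧ e = s(x, y)

/-- The set `E` of nearest-neighbour edges of `ℤ^d`. -/
abbrev Edge (d : ℕ) := {e : Sym2 (Vertex d) // IsEdge e}

/-- Percolation configurations `ω ∈ {0,1}^E`. -/
abbrev Config (d : ℕ) := Edge d → Bool

/-- One step along an open edge of `ω`. -/
def step {d : ℕ} (ω : Config d) (x y : Vertex d) : Prop :=
  ∃ h : adj x y, ω ⟨s(x, y), x, y, h, rfl⟩ = true

/-- `x` and `y` are joined by a path of open edges. -/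
def Conn {d : ℕ} (ω : Config d) : Vertex d → Vertex d → Prop :=
  Relation.ReflTransGen (step ω)

/-- The open cluster of `x` in `ω`. -/
def cluster {d : ℕ} (ω : Config d) (x : Vertex d) : Set (Vertex d) :=
  {y | Conn ω x y}

/-- The box `Λ_n = {−n, …, n}^d`. -/
def box (d n : ℕ) : Set (Vertex d) := {x | ∀ i, |x i| ≤ (n : ℤ)}

/-- `∂Λ_n`: vertices of `Λ_n` having a nearest neighbour outside `Λ_n`. -/
def boxBoundary (d n : ℕ) : Set (Vertex d) :=
  {x | x ∈ box d n ∧ ∃ y, adj x y ∧ y ∉ box d n}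

/-- The origin of `ℤ^d`. -/
def origin (d : ℕ) : Vertex d := fun _ => 0

/-- The event `{0 ↔ ∂Λ_n}`. -/
def ZeroToBoundary (d n : ℕ) : Set (Config d) :=
  {ω | ∃ y ∈ boxBoundary d n, Conn ω (origin d) y}

/-- The event `{0 ↔ ∞}` that the open cluster of the origin is infinite. -/
def ZeroToInfinity (d : ℕ) : Set (Config d) :=
  {ω | (cluster ω (origin d)).Infinite}

/-- `μ` is the law of i.i.d. Bernoulli(p) edge variables: it is a probability measure on
`{0,1}^E` under which every finite cylinder has the corresponding product probability. -/
def IsBernoulli (d : ℕ) (p : ℝ) (μ : Measure (Config d)) : Prop :=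
  IsProbabilityMeasure μ ∧
    ∀ (s : Finset (Edge d)) (f : Edge d → Bool),
      μ {ω : Config d | ∀ e ∈ s, ω e = f e} =
        ENNReal.ofReal (∏ e ∈ s, if f e then p else 1 - p)


open Classical in
/-- weight -/
noncomputable def wt {d : ℕ} (p : ℝ) (F T : Finset (Edge d)) : ℝ :=
  ∏ e ∈ F, if e ∈ T then p else 1 - p

open Classical in
noncomputable def cfg {d : ℕ} (T : Finset (Edge d)) : Config d := fun e => decide (e ∈ T)

open Classical in
noncomputable def Pf {d : ℕ} (p : ℝ) (F : Finset (Edge d)) (A : Set (Config d)) : ℝ :=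
  ∑ T ∈ F.powerset, if cfg T ∈ A then wt p F T else 0

def Dep {d : ℕ} (F : Finset (Edge d)) (A : Set (Config d)) : Prop :=
  ∀ ω ω' : Config d, (∀ e ∈ F, ω e = ω' e) → ω ∈ A → ω' ∈ A

theorem Dep.iff {d : ℕ} {F : Finset (Edge d)} {A : Set (Config d)} (h : Dep F A)
    {ω ω' : Config d} (hh : ∀ e ∈ F, ω e = ω' e) : ω ∈ A ↔ ω' ∈ A :=
  ⟨h ω ω' hh, h ω' ω (fun e he => (hh e he).symm)⟩

theorem Dep.mono {d : ℕ} {F F' : Finset (Edge d)} {A : Set (Config d)} (h : Dep F A)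
    (hF : F ⊆ F') : Dep F' A := fun ω ω' hh => h ω ω' (fun e he => hh e (hF he))

theorem Dep.inter {d : ℕ} {F : Finset (Edge d)} {A B : Set (Config d)} (h : Dep F A)
    (h' : Dep F B) : Dep F (A ∩ B) := fun ω ω' hh hA => ⟨h ω ω' hh hA.1, h' ω ω' hh hA.2⟩

theorem Dep.compl {d : ℕ} {F : Finset (Edge d)} {A : Set (Config d)} (h : Dep F A) :
    Dep F Aᶜ := fun _ _ hh hA hA' => hA (h.iff hh |>.2 hA')

def cyl {d : ℕ} (F T : Finset (Edge d)) : Set (Config d) := {ω | ∀ e ∈ F, ω e = cfg T e}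

theorem cyl_meas {d : ℕ} (F T : Finset (Edge d)) : MeasurableSet (cyl F T) := by
  have : cyl F T = ⋂ e ∈ F, (fun ω : Config d => ω e) ⁻¹' {cfg T e} := by
    ext ω; simp [cyl]
  rw [this]
  exact Finset.measurableSet_biInter _ fun e _ => measurable_pi_apply e (measurableSet_singleton _)

theorem cyl_real {d : ℕ} {p : ℝ} {ν : Measure (Config d)} (hp : p ∈ Set.Ioo (0 : ℝ) 1)
    (hν : IsBernoulli d p ν) (F T : Finset (Edge d)) : ν.real (cyl F T) = wt p F T := by
  have := hν.2 F (cfg T)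
  unfold Measure.real cyl
  rw [this, ENNReal.toReal_ofReal]
  · simp [wt, cfg]
  · apply Finset.prod_nonneg
    intro e _
    have := hp.1; have := hp.2
    split_ifs <;> linarith

open Classical in
theorem Dep.eq_union {d : ℕ} {F : Finset (Edge d)} {A : Set (Config d)} (h : Dep F A) :
    A = ⋃ T ∈ F.powerset.filter (fun T => cfg T ∈ A), cyl F T := by
  ext ω
  simp only [Set.mem_iUnion, Finset.mem_filter, Finset.mem_powerset, exists_prop]
  constructor
  · intro hω
    have key : ∀ e ∈ F, ω e = cfg (F.filter (fun e => ω e = true)) e := by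
      intro e he
      simp [cfg, he]
    exact ⟨F.filter (fun e => ω e = true), ⟨Finset.filter_subset _ _, h _ _ key hω⟩, key⟩
  · rintro ⟨T, ⟨_, hT⟩, hc⟩
    exact (h.iff hc).2 hT

theorem Dep.meas {d : ℕ} {F : Finset (Edge d)} {A : Set (Config d)} (h : Dep F A) :
    MeasurableSet A := by
  classical
  rw [h.eq_union]
  exact Finset.measurableSet_biUnion _ fun T _ => cyl_meas F T

theorem Dep.real {d : ℕ} {p : ℝ} {ν : Measure (Config d)} (hp : p ∈ Set.Ioo (0 : ℝ) 1)
    (hν : IsBernoulli d p ν) {F : Finset (Edge d)} {A : Set (Config d)} (h : Dep F A) :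
    ν.real A = Pf p F A := by
  classical
  have := hν.1
  conv_lhs => rw [h.eq_union]
  rw [measureReal_biUnion_finset _ (fun T _ => cyl_meas F T)]
  · simp_rw [cyl_real hp hν]
    rw [Pf, Finset.sum_filter]
  · intro T hT T' hT' hne
    simp only [Finset.coe_filter, Finset.mem_powerset, Set.mem_ofPred_eq] at hT hT'
    rw [Function.onFun, Set.disjoint_left]
    intro ω h1 h2
    apply hne
    ext e
    by_cases he : e ∈ F
    · have := (h1 e he).symm.trans (h2 e he)
      simpa [cfg] using this
    · exact ⟨fun h => absurd (hT.1 h) he, fun h => absurd (hT'.1 h) he⟩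

theorem sum_powerset_union {α : Type*} [DecidableEq α] (F1 F2 : Finset α) (hd : Disjoint F1 F2)
    (g : Finset α → ℝ) :
    ∑ T ∈ (F1 ∪ F2).powerset, g T = ∑ T1 ∈ F1.powerset, ∑ T2 ∈ F2.powerset, g (T1 ∪ T2) := by
  induction F2 using Finset.induction_on generalizing g with
  | empty => simp
  | insert a s ha ih =>
    rw [Finset.disjoint_insert_right] at hd
    rw [Finset.union_insert, Finset.sum_powerset_insert (by simp [ha, hd.1]), ih hd.2, ih hd.2,
      ← Finset.sum_add_distrib]
    refine Finset.sum_congr rfl fun T _ => ?_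
    rw [Finset.sum_powerset_insert ha]
    simp [Finset.union_insert]

theorem indep {d : ℕ} {p : ℝ} {ν : Measure (Config d)} (hp : p ∈ Set.Ioo (0 : ℝ) 1)
    (hν : IsBernoulli d p ν) {F1 F2 : Finset (Edge d)} {A B : Set (Config d)} (hA : Dep F1 A)
    (hB : Dep F2 B) (hd : Disjoint F1 F2) : ν.real (A ∩ B) = ν.real A * ν.real B := by
  classical
  rw [hA.real hp hν, hB.real hp hν, ((hA.mono Finset.subset_union_left).inter
    (hB.mono (Finset.subset_union_right (s₁ := F1)))).real hp hν]
  rw [Pf, Pf, Pf, sum_powerset_union _ _ hd, Finset.sum_mul_sum]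
  refine Finset.sum_congr rfl fun T1 h1 => Finset.sum_congr rfl fun T2 h2 => ?_
  rw [Finset.mem_powerset] at h1 h2
  have e1 : ∀ e ∈ F1, e ∉ T2 := fun e he h => Finset.disjoint_left.1 hd he (h2 h)
  have e2 : ∀ e ∈ F2, e ∉ T1 := fun e he h => Finset.disjoint_left.1 hd (h1 h) he
  have hA' : cfg (T1 ∪ T2) ∈ A ↔ cfg T1 ∈ A := hA.iff (fun e he => by simp [cfg, e1 e he])
  have hB' : cfg (T1 ∪ T2) ∈ B ↔ cfg T2 ∈ B := hB.iff (fun e he => by simp [cfg, e2 e he])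
  have hw : wt p (F1 ∪ F2) (T1 ∪ T2) = wt p F1 T1 * wt p F2 T2 := by
    rw [wt, Finset.prod_union hd]
    congr 1
    · exact Finset.prod_congr rfl fun e he => by simp [e1 e he]
    · exact Finset.prod_congr rfl fun e he => by simp [e2 e he]
  rw [Set.mem_inter_iff, hA', hB', hw]
  by_cases a : cfg T1 ∈ A <;> by_cases b : cfg T2 ∈ B <;> simp [a, b]

/-- increasing event -/
def Incr {d : ℕ} (A : Set (Config d)) : Prop :=
  ∀ ω ω' : Config d, (∀ e, ω e = true → ω' e = true) → ω ∈ A → ω' ∈ A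

open Classical in
def piv {d : ℕ} (e : Edge d) (A : Set (Config d)) : Set (Config d) :=
  {ω | Function.update ω e true ∈ A ∧ Function.update ω e false ∉ A}

open Classical in
theorem piv_dep {d : ℕ} {F : Finset (Edge d)} {A : Set (Config d)} (h : Dep F A) (e : Edge d) :
    Dep (F.erase e) (piv e A) := by
  intro ω ω' hh hω
  have : ∀ b : Bool, ∀ e' ∈ F, Function.update ω e b e' = Function.update ω' e b e' := by
    intro b e' he'
    by_cases h : e' = e
    · subst h; simp
    · simp [h, hh e' (Finset.mem_erase.2 ⟨h, he'⟩)]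
  exact ⟨(h.iff (this true)).1 hω.1, fun hx => hω.2 ((h.iff (this false)).2 hx)⟩

open Classical in
theorem russo {d : ℕ} (p : ℝ) {F : Finset (Edge d)} {A : Set (Config d)}
    (hI : Incr A) :
    HasDerivAt (fun q => Pf q F A) (∑ e ∈ F, Pf p (F.erase e) (piv e A)) p := by
  have h1 : HasDerivAt (fun q => Pf q F A)
      (∑ T ∈ F.powerset, if cfg T ∈ A then
        ∑ e ∈ F, wt p (F.erase e) T * (if e ∈ T then 1 else -1) else 0) p := by
    unfold Pf
    apply HasDerivAt.fun_sum
    intro T _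
    by_cases hT : cfg T ∈ A
    · simp only [hT, if_true]
      unfold wt
      have := HasDerivAt.fun_finsetProd (u := F) (f := fun e (q : ℝ) => if e ∈ T then q else 1 - q)
        (f' := fun e => if e ∈ T then (1 : ℝ) else -1) (x := p) (by
          intro e _
          by_cases he : e ∈ T
          · simpa [he] using hasDerivAt_id' p
          · simpa [he] using (hasDerivAt_id p).const_sub 1)
      simpa using this
    · simpa [hT] using hasDerivAt_const p (0 : ℝ)
  convert h1 using 1
  have : ∀ T ∈ F.powerset, (if cfg T ∈ A then
        ∑ e ∈ F, wt p (F.erase e) T * (if e ∈ T then (1 : ℝ) else -1) else 0)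
      = ∑ e ∈ F, if cfg T ∈ A then wt p (F.erase e) T * (if e ∈ T then (1 : ℝ) else -1) else 0 := by
    intro T _
    split_ifs <;> simp
  rw [Finset.sum_congr rfl this, Finset.sum_comm]
  refine Finset.sum_congr rfl fun e he => ?_
  conv_rhs => rw [← Finset.insert_erase he]
  rw [Finset.sum_powerset_insert (Finset.notMem_erase e F), ← Finset.sum_add_distrib, Pf]
  refine Finset.sum_congr rfl fun T hT => ?_
  rw [Finset.mem_powerset] at hT
  have heT : e ∉ T := fun h => Finset.notMem_erase e F (hT h)
  rw [Finset.erase_insert (Finset.notMem_erase e F)]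
  have hw : wt p (F.erase e) (insert e T) = wt p (F.erase e) T := by
    refine Finset.prod_congr rfl fun e' he' => ?_
    have : e' ≠ e := (Finset.mem_erase.1 he').1
    simp [this]
  have u1 : Function.update (cfg T) e true = cfg (insert e T) := by
    ext e'
    by_cases h : e' = e
    · subst h; simp [cfg]
    · simp [cfg, h]
  have u2 : Function.update (cfg T) e false = cfg T := by
    ext e'
    by_cases h : e' = e
    · subst h; simp [cfg, heT]
    · simp [h]
  have hm : cfg T ∈ A → cfg (insert e T) ∈ A := by
    apply hI
    intro e' h
    simp [cfg] at h ⊢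
    exact Or.inr h
  rw [hw]
  simp only [piv, Set.mem_ofPred_eq, u1, u2, heT, if_false, Finset.mem_insert_self, if_true]
  by_cases a : cfg T ∈ A
  · simp [a, hm a]
  · simp [a]

theorem Pf_nonneg {d : ℕ} {p : ℝ} (hp : p ∈ Set.Ioo (0 : ℝ) 1) (F : Finset (Edge d))
    (A : Set (Config d)) : 0 ≤ Pf p F A := by
  classical
  refine Finset.sum_nonneg fun T _ => ?_
  split_ifs
  · refine Finset.prod_nonneg fun e _ => ?_
    have := hp.1; have := hp.2
    split_ifs <;> linarith
  · rfl

theorem Pf_mono {d : ℕ} {p q : ℝ} (hp : p ∈ Set.Ioo (0 : ℝ) 1) (hq : q ∈ Set.Ioo (0 : ℝ) 1)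
    (hpq : p ≤ q) {F : Finset (Edge d)} {A : Set (Config d)} (hI : Incr A) :
    Pf p F A ≤ Pf q F A := by
  classical
  have : MonotoneOn (fun q => Pf q F A) (Set.Ioo (0 : ℝ) 1) := by
    apply monotoneOn_of_deriv_nonneg (convex_Ioo 0 1)
    · exact fun x _ => (russo x hI).continuousAt.continuousWithinAt
    · exact fun x _ => (russo x hI).differentiableAt.differentiableWithinAt
    · intro x hx
      rw [interior_Ioo] at hx
      rw [(russo x hI).deriv]
      exact Finset.sum_nonneg fun e _ => Pf_nonneg hx _ _
  exact this hp hq hpq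

theorem adj_symm {d : ℕ} {x y : Vertex d} (h : adj x y) : adj y x := by
  unfold adj at *
  rw [← h]
  exact Finset.sum_congr rfl fun i _ => by omega

theorem adj_le {d : ℕ} {x y : Vertex d} (h : adj x y) (i : Fin d) : |y i - x i| ≤ 1 := by
  unfold adj at h
  have := Finset.single_le_sum (f := fun i => (x i - y i).natAbs) (fun _ _ => Nat.zero_le _)
    (Finset.mem_univ i)
  simp only [h] at this
  rw [abs_le]; omega

/-- the edge between adjacent vertices -/
def mkE {d : ℕ} {x y : Vertex d} (h : adj x y) : Edge d := ⟨s(x, y), x, y, h, rfl⟩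

theorem mkE_symm {d : ℕ} {x y : Vertex d} (h : adj x y) : mkE (adj_symm h) = mkE h :=
  Subtype.ext Sym2.eq_swap

theorem step_symm {d : ℕ} {ω : Config d} {x y : Vertex d} (h : step ω x y) : step ω y x := by
  obtain ⟨h, ho⟩ := h
  refine ⟨adj_symm h, ?_⟩
  have := mkE_symm h
  unfold mkE at this
  rw [this]; exact ho

theorem Conn.symm' {d : ℕ} {ω : Config d} {x y : Vertex d} (h : Conn ω x y) : Conn ω y x :=
  by
  induction h with
  | refl => exact Relation.ReflTransGen.refl
  | tail _ hs ih => exact Relation.ReflTransGen.head (step_symm hs) ih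

theorem step_mono {d : ℕ} {ω ω' : Config d} (h : ∀ e, ω e = true → ω' e = true)
    {x y : Vertex d} (hs : step ω x y) : step ω' x y := ⟨hs.1, h _ hs.2⟩

theorem Conn.mono' {d : ℕ} {ω ω' : Config d} (h : ∀ e, ω e = true → ω' e = true)
    {x y : Vertex d} (hs : Conn ω x y) : Conn ω' x y :=
  by
  induction hs with
  | refl => exact Relation.ReflTransGen.refl
  | tail _ hs ih => exact Relation.ReflTransGen.tail ih (step_mono h hs)

theorem box_finite (d n : ℕ) : (box d n).Finite := by
  refine (Set.finite_Icc (fun _ => -(n : ℤ) : Vertex d) (fun _ => (n : ℤ))).subset ?_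
  intro x hx
  exact ⟨fun i => (abs_le.1 (hx i)).1, fun i => (abs_le.1 (hx i)).2⟩

noncomputable def boxF (d n : ℕ) : Finset (Vertex d) := (box_finite d n).toFinset

theorem mem_boxF {d n : ℕ} {x : Vertex d} : x ∈ boxF d n ↔ ∀ i, |x i| ≤ (n : ℤ) := by
  simp [boxF, box]

theorem touch_finite {d : ℕ} (S : Finset (Vertex d)) :
    {e : Edge d | ∃ v ∈ e.1, v ∈ S}.Finite := by
  have : {e : Edge d | ∃ v ∈ e.1, v ∈ S} ⊆ ⋃ v ∈ S, {e : Edge d | v ∈ e.1} := by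
    intro e he
    obtain ⟨v, h1, h2⟩ := he
    simp only [Set.mem_iUnion]
    exact ⟨v, h2, h1⟩
  refine Set.Finite.subset (Set.Finite.biUnion S.finite_toSet fun v _ => ?_) this
  refine Set.Finite.of_finite_image (f := Subtype.val) ?_ Subtype.val_injective.injOn
  refine ((Set.finite_Icc (v - 1) (v + 1)).image (fun w => s(v, w))).subset ?_
  rintro _ ⟨⟨e, x, y, hxy, rfl⟩, hv, rfl⟩
  have hv' : v ∈ s(x, y) := hv
  rw [Sym2.mem_iff] at hv'
  rcases hv' with rfl | rfl
  · refine ⟨y, ⟨fun i => ?_, fun i => ?_⟩, rfl⟩ <;>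
    · have := abs_le.1 (adj_le hxy i)
      simp; omega
  · refine ⟨x, ⟨fun i => ?_, fun i => ?_⟩, Sym2.eq_swap⟩ <;>
    · have := abs_le.1 (adj_le hxy i)
      simp; omega

noncomputable def tch {d : ℕ} (S : Finset (Vertex d)) : Finset (Edge d) := (touch_finite S).toFinset

theorem mem_tch {d : ℕ} {S : Finset (Vertex d)} {e : Edge d} :
    e ∈ tch S ↔ ∃ v ∈ e.1, v ∈ S := by
  simp [tch]

noncomputable def ins {d : ℕ} (S : Finset (Vertex d)) : Finset (Edge d) :=
  @Finset.filter _ (fun e : Edge d => ∀ v ∈ e.1, v ∈ S) (Classical.decPred _) (tch S)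

theorem mem_tch_mk {d : ℕ} {S : Finset (Vertex d)} {x y : Vertex d} (h : adj x y) :
    mkE h ∈ tch S ↔ x ∈ S ∨ y ∈ S := by
  rw [mem_tch]; simp [mkE]

theorem mem_ins_mk {d : ℕ} {S : Finset (Vertex d)} {x y : Vertex d} (h : adj x y) :
    mkE h ∈ ins S ↔ x ∈ S ∧ y ∈ S := by
  simp only [ins, Finset.mem_filter, mem_tch_mk]; simp [mkE]; tauto

theorem tch_mono {d : ℕ} {S S' : Finset (Vertex d)} (h : S ⊆ S') : tch S ⊆ tch S' := by
  intro e he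
  rw [mem_tch] at *
  obtain ⟨v, h1, h2⟩ := he
  exact ⟨v, h1, h h2⟩

open Classical in
noncomputable def restr {d : ℕ} (K : Set (Edge d)) (ω : Config d) : Config d :=
  fun e => if e ∈ K then ω e else false

theorem restr_le {d : ℕ} {K : Set (Edge d)} {ω : Config d} (e : Edge d)
    (h : restr K ω e = true) : ω e = true := by
  unfold restr at h; split_ifs at h; exact h

theorem restr_true {d : ℕ} {K : Set (Edge d)} {ω : Config d} {e : Edge d} :
    restr K ω e = true ↔ e ∈ K ∧ ω e = true := by
  unfold restr; split_ifs with h <;> simp [h]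

theorem restr_mono {d : ℕ} {K : Set (Edge d)} {ω ω' : Config d}
    (h : ∀ e, ω e = true → ω' e = true) (e : Edge d) (he : restr K ω e = true) :
    restr K ω' e = true := by
  rw [restr_true] at *; exact ⟨he.1, h _ he.2⟩

theorem restr_congr {d : ℕ} {K : Set (Edge d)} {ω ω' : Config d}
    (h : ∀ e ∈ K, ω e = ω' e) : restr K ω = restr K ω' := by
  ext e; unfold restr; split_ifs with h' <;> simp [h e, h']

theorem step_restr {d : ℕ} {K : Set (Edge d)} {ω : Config d} {x y : Vertex d} :
    step (restr K ω) x y ↔ ∃ h : adj x y, mkE h ∈ K ∧ ω (mkE h) = true := by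
  unfold step; simp [restr_true, mkE]

/-- `x` is connected to outside of `W`. -/
def out {d : ℕ} (W : Finset (Vertex d)) (ω : Config d) (x : Vertex d) : Prop :=
  ∃ z, z ∉ W ∧ Conn ω x z

theorem out.mono {d : ℕ} {W : Finset (Vertex d)} {ω ω' : Config d}
    (h : ∀ e, ω e = true → ω' e = true) {x : Vertex d} (ho : out W ω x) : out W ω' x := by
  obtain ⟨z, hz, hc⟩ := ho
  exact ⟨z, hz, hc.mono' h⟩

theorem out.head {d : ℕ} {W : Finset (Vertex d)} {ω : Config d} {x y : Vertex d}
    (hs : step ω x y) (ho : out W ω y) : out W ω x := by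
  obtain ⟨z, hz, hc⟩ := ho
  exact ⟨z, hz, Relation.ReflTransGen.head hs hc⟩

theorem out_congr {d : ℕ} {W : Finset (Vertex d)} {ω ω' : Config d}
    (h : ∀ e ∈ tch W, ω e = ω' e) {x : Vertex d} (ho : out W ω x) : out W ω' x := by
  obtain ⟨z, hz, hc⟩ := ho
  induction hc using Relation.ReflTransGen.head_induction_on with
  | refl => exact ⟨z, hz, Relation.ReflTransGen.refl⟩
  | @head a c hs _ ih =>
    by_cases ha : a ∈ W
    · obtain ⟨hadj, hopen⟩ := hs
      refine ih.head ⟨hadj, ?_⟩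
      rw [← hopen]
      exact (h (mkE hadj) ((mem_tch_mk hadj).2 (Or.inl ha))).symm
    · exact ⟨a, ha, Relation.ReflTransGen.refl⟩

/-- event that the origin leaves box n -/
def R (d n : ℕ) : Set (Config d) := {ω | out (boxF d n) ω (origin d)}

theorem R_dep (d n : ℕ) : Dep (tch (boxF d n)) (R d n) := fun _ _ h ho => out_congr h ho

theorem R_incr (d n : ℕ) : Incr (R d n) := fun _ _ h ho => out.mono h ho

/-- event that the origin is connected inside S to an endpoint of the boundary edge e -/
def G {d : ℕ} (S : Finset (Vertex d)) (e : Edge d) : Set (Config d) :=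
  {ω | ∃ x y, x ∈ S ∧ y ∉ S ∧ e.1 = s(x, y) ∧ Conn (restr (ins S) ω) (origin d) x}

theorem G_dep {d : ℕ} (S : Finset (Vertex d)) (e : Edge d) : Dep (ins S) (G S e) := by
  intro ω ω' h hG
  have := restr_congr (K := (ins S : Set (Edge d))) (ω := ω) (ω' := ω') (by simpa using h)
  unfold G at *
  simpa [this] using hG

theorem G_incr {d : ℕ} (S : Finset (Vertex d)) (e : Edge d) : Incr (G S e) := by
  rintro ω ω' h ⟨x, y, hx, hy, he, hc⟩
  exact ⟨x, y, hx, hy, he, hc.mono' (restr_mono h)⟩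

/-- The Duminil-Copin–Tassion functional. -/
noncomputable def phi {d : ℕ} (p : ℝ) (S : Finset (Vertex d)) : ℝ :=
  p * ∑ e ∈ tch S, Pf p (ins S) (G S e)

theorem phi_mono {d : ℕ} {p q : ℝ} (hp : p ∈ Set.Ioo (0 : ℝ) 1) (hq : q ∈ Set.Ioo (0 : ℝ) 1)
    (hpq : p ≤ q) (S : Finset (Vertex d)) : phi p S ≤ phi q S := by
  unfold phi
  have := hp.1
  exact mul_le_mul hpq (Finset.sum_le_sum fun e _ => Pf_mono hp hq hpq (G_incr S e))
    (Finset.sum_nonneg fun e _ => Pf_nonneg hp _ _) (by linarith)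

/-! Part 2 -/

open Classical in
noncomputable def SS {d : ℕ} (W : Finset (Vertex d)) (ω : Config d) : Finset (Vertex d) :=
  W.filter (fun x => ¬ out W ω x)

open Classical in
theorem SS_dep {d : ℕ} (W S : Finset (Vertex d)) (hS : S ⊆ W) :
    Dep (tch W \ ins S) {ω | SS W ω = S} := by
  intro ω ω' h hω
  have hω : SS W ω = S := hω
  have hm : ∀ x, out W ω x → x ∉ S := by
    intro x hx
    rw [← hω]; simp [SS, hx]
  have hm' : ∀ x, x ∈ W → x ∉ S → out W ω x := by
    intro x hx hxS
    by_contra hc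
    exact hxS (by rw [← hω]; simp [SS, hx, hc])
  have h1 : ∀ x, out W ω x → out W ω' x := by
    rintro x ⟨z, hz, hc⟩
    induction hc using Relation.ReflTransGen.head_induction_on with
    | refl => exact ⟨z, hz, Relation.ReflTransGen.refl⟩
    | @head a c hs hc ih =>
      by_cases ha : a ∈ W
      · have hout : out W ω a := ⟨z, hz, Relation.ReflTransGen.head hs hc⟩
        obtain ⟨hadj, hopen⟩ := hs
        refine ih.head ⟨hadj, ?_⟩
        rw [← hopen]
        refine (h (mkE hadj) ?_).symm
        rw [Finset.mem_sdiff, mem_tch_mk, mem_ins_mk]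
        exact ⟨Or.inl ha, fun h => hm a hout h.1⟩
      · exact ⟨a, ha, Relation.ReflTransGen.refl⟩
  have h2 : ∀ x, out W ω' x → out W ω x := by
    rintro x ⟨z, hz, hc⟩
    induction hc using Relation.ReflTransGen.head_induction_on with
    | refl => exact ⟨z, hz, Relation.ReflTransGen.refl⟩
    | @head a c hs hc ih =>
      by_cases ha : a ∈ W
      · obtain ⟨hadj, hopen⟩ := hs
        refine ih.head ⟨hadj, ?_⟩
        rw [← hopen]
        refine (h (mkE hadj) ?_)
        rw [Finset.mem_sdiff, mem_tch_mk, mem_ins_mk]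
        exact ⟨Or.inl ha, fun h => hm c ih h.2⟩
      · exact ⟨a, ha, Relation.ReflTransGen.refl⟩
  show SS W ω' = S
  rw [← hω]
  ext x
  simp only [SS, Finset.mem_filter]
  rw [show out W ω' x ↔ out W ω x from ⟨h2 x, h1 x⟩]

open Classical in
theorem piv_of {d n : ℕ} {S : Finset (Vertex d)} {ω : Config d} {e : Edge d}
    (h0 : origin d ∈ S) (hS : SS (boxF d n) ω = S) (hG : ω ∈ G S e) : ω ∈ piv e (R d n) := by
  set W := boxF d n
  obtain ⟨x, y, hx, hy, he, hc⟩ := hG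
  have hSW : S ⊆ W := by rw [← hS]; exact Finset.filter_subset _ _
  have up : ∀ e', ω e' = true → Function.update ω e true e' = true := by
    intro e' h
    by_cases h' : e' = e
    · subst h'; simp
    · simp [h', h]
  constructor
  · have h1 : Conn (Function.update ω e true) (origin d) x :=
      hc.mono' (fun e' h => up e' (restr_le e' h))
    have hadj : adj x y := by
      obtain ⟨e, a, b, hab, rfl⟩ := e
      rcases Sym2.eq_iff.1 he with ⟨rfl, rfl⟩ | ⟨rfl, rfl⟩
      · exact hab
      · exact adj_symm hab
    have hee : mkE hadj = e := Subtype.ext he.symm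
    have h2 : step (Function.update ω e true) x y := by
      refine ⟨hadj, ?_⟩
      change Function.update ω e true (mkE hadj) = true
      rw [hee]; simp
    have h3 : out W ω y := by
      by_cases hyW : y ∈ W
      · by_contra hc
        exact hy (by rw [← hS]; simp [SS, hyW, hc])
      · exact ⟨y, hyW, Relation.ReflTransGen.refl⟩
    obtain ⟨z, hz, hyz⟩ := h3
    exact ⟨z, hz, (h1.tail h2).trans (hyz.mono' up)⟩
  · intro hR
    have : out W ω (origin d) := by
      refine out.mono ?_ hR
      intro e' h
      by_cases h' : e' = e
      · subst h'; simp at h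
      · simpa [h'] using h
    rw [← hS] at h0
    simp [SS, this] at h0

open Classical in
theorem deriv_bound {d n : ℕ} {p : ℝ} {ν : Measure (Config d)} (hp : p ∈ Set.Ioo (0 : ℝ) 1)
    (hν : IsBernoulli d p ν) (hphi : ∀ S : Finset (Vertex d), origin d ∈ S → 1 ≤ phi p S) :
    1 - Pf p (tch (boxF d n)) (R d n) ≤
      ∑ e ∈ tch (boxF d n), Pf p ((tch (boxF d n)).erase e) (piv e (R d n)) := by
  have := hν.1
  set W := boxF d n with hW
  set Q := W.powerset.filter (fun S => origin d ∈ S) with hQ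
  have hQW : ∀ S ∈ Q, S ⊆ W ∧ origin d ∈ S := by intro S hS; simpa [hQ] using hS
  have hdisj : ∀ B : Set (Config d), (Q : Set (Finset (Vertex d))).PairwiseDisjoint
      (fun S => {ω | SS W ω = S} ∩ B) := by
    intro B S _ S' _ hne
    rw [Function.onFun, Set.disjoint_left]
    rintro ω ⟨h1, _⟩ ⟨h2, _⟩
    exact hne (Eq.trans (Eq.symm h1) h2)
  have hms : ∀ S ∈ Q, MeasurableSet {ω | SS W ω = S} := fun S hS => (SS_dep W S (hQW S hS).1).meas
  rw [← (R_dep d n).real hp hν, ← probReal_compl_eq_one_sub (R_dep d n).meas]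
  have e1 : ν.real (R d n)ᶜ ≤ ∑ S ∈ Q, ν.real {ω | SS W ω = S} := by
    refine le_trans (measureReal_mono ?_ (measure_ne_top ν _)) (measureReal_biUnion_finset_le Q _)
    intro ω hω
    have h0 : origin d ∈ W := by rw [hW, mem_boxF]; intro i; simp [origin]
    simp only [Set.mem_iUnion]
    refine ⟨SS W ω, ?_, rfl⟩
    rw [hQ, Finset.mem_filter, Finset.mem_powerset]
    refine ⟨Finset.filter_subset _ _, ?_⟩
    rw [SS, Finset.mem_filter]
    exact ⟨h0, hω⟩
  have e2 : ∀ S ∈ Q, ν.real {ω | SS W ω = S} ≤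
      ∑ e ∈ tch W, ν.real ({ω | SS W ω = S} ∩ piv e (R d n)) := by
    intro S hS
    obtain ⟨hSW, h0⟩ := hQW S hS
    have h1 : 1 ≤ ∑ e ∈ tch S, ν.real (G S e) := by
      have := hphi S h0
      unfold phi at this
      simp_rw [fun e => (G_dep S e).real hp hν]
      have h3 : 0 ≤ ∑ e ∈ tch S, Pf p (ins S) (G S e) :=
        Finset.sum_nonneg fun e _ => Pf_nonneg hp _ _
      nlinarith [hp.1, hp.2]
    calc ν.real {ω | SS W ω = S} ≤ ν.real {ω | SS W ω = S} * ∑ e ∈ tch S, ν.real (G S e) :=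
          le_mul_of_one_le_right measureReal_nonneg h1
      _ = ∑ e ∈ tch S, ν.real ({ω | SS W ω = S} ∩ G S e) := by
          rw [Finset.mul_sum]
          refine Finset.sum_congr rfl fun e _ => ?_
          rw [indep hp hν (SS_dep W S hSW) (G_dep S e) Finset.sdiff_disjoint]
      _ ≤ ∑ e ∈ tch S, ν.real ({ω | SS W ω = S} ∩ piv e (R d n)) := by
          refine Finset.sum_le_sum fun e _ => measureReal_mono ?_
          rintro ω ⟨h1, h2⟩
          exact ⟨h1, piv_of h0 h1 h2⟩
      _ ≤ _ := Finset.sum_le_sum_of_subset_of_nonneg (tch_mono hSW)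
          fun _ _ _ => measureReal_nonneg
  refine e1.trans ((Finset.sum_le_sum e2).trans ?_)
  rw [Finset.sum_comm]
  refine Finset.sum_le_sum fun e _ => ?_
  rw [← (piv_dep (R_dep d n) e).real hp hν]
  rw [← measureReal_biUnion_finset (hdisj _)
    (fun S hS => (hms S hS).inter (piv_dep (R_dep d n) e).meas)]
  refine measureReal_mono ?_
  intro ω hω
  simp only [Set.mem_iUnion] at hω
  obtain ⟨S, _, h⟩ := hω
  exact h.2

theorem R_lower {d n : ℕ} {μ : ℝ → Measure (Config d)}
    (hμ : ∀ p ∈ Set.Ioo (0 : ℝ) 1, IsBernoulli d p (μ p)) {p q : ℝ}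
    (hp : p ∈ Set.Ioo (0 : ℝ) 1) (hq : q ∈ Set.Ioo (0 : ℝ) 1) (hpq : p < q)
    (hphi : ∀ S : Finset (Vertex d), origin d ∈ S → 1 ≤ phi p S) :
    1 - Real.exp (p - q) ≤ (μ q).real (R d n) := by
  classical
  rw [(R_dep d n).real hq (hμ q hq)]
  set F := tch (boxF d n)
  have hsub : Set.Icc p q ⊆ Set.Ioo 0 1 := fun x hx => ⟨hp.1.trans_le hx.1, hx.2.trans_lt hq.2⟩
  have hder : ∀ x, HasDerivAt (fun x => (1 - Pf x F (R d n)) * Real.exp x)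
      ((-∑ e ∈ F, Pf x (F.erase e) (piv e (R d n))) * Real.exp x
        + (1 - Pf x F (R d n)) * Real.exp x) x := by
    intro x
    exact ((russo x (R_incr d n)).const_sub 1).mul (Real.hasDerivAt_exp x)
  have hanti : AntitoneOn (fun x => (1 - Pf x F (R d n)) * Real.exp x) (Set.Icc p q) := by
    apply antitoneOn_of_deriv_nonpos (convex_Icc p q)
    · exact fun x _ => (hder x).continuousAt.continuousWithinAt
    · exact fun x _ => (hder x).differentiableAt.differentiableWithinAt
    · intro x hx
      have hx' := interior_subset hx
      rw [(hder x).deriv]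
      have := deriv_bound (n := n) (hsub hx') (hμ x (hsub hx'))
        (fun S h0 => (hphi S h0).trans (phi_mono hp (hsub hx') hx'.1 S))
      have := Real.exp_pos x
      nlinarith
  have h := hanti (Set.left_mem_Icc.2 hpq.le) (Set.right_mem_Icc.2 hpq.le) hpq.le
  simp only at h
  have h0 := Pf_nonneg hp F (R d n)
  have h1 : (1 - Pf q F (R d n)) * Real.exp q ≤ Real.exp p := by
    have := Real.exp_pos p
    nlinarith
  rw [Real.exp_sub]
  have := Real.exp_pos q
  have h2 := (le_div_iff₀ this).2 h1
  linarith

/-! Part 1 -/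

theorem conn_ins {d : ℕ} {S : Finset (Vertex d)} {ω : Config d} (h0 : origin d ∈ S)
    {x : Vertex d} (h : Conn (restr (ins S) ω) (origin d) x) : x ∈ S := by
  cases h with
  | refl => exact h0
  | tail _ hs =>
    obtain ⟨hadj, he, _⟩ := step_restr.1 hs
    exact ((mem_ins_mk hadj).1 he).2

open Classical in
noncomputable def Clus {d : ℕ} (S : Finset (Vertex d)) (ω : Config d) : Finset (Vertex d) :=
  S.filter (fun x => Conn (restr (ins S) ω) (origin d) x)

theorem mem_Clus {d : ℕ} {S : Finset (Vertex d)} {ω : Config d} (h0 : origin d ∈ S)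
    {x : Vertex d} : x ∈ Clus S ω ↔ Conn (restr (ins S) ω) (origin d) x := by
  simp only [Clus, Finset.mem_filter]
  exact ⟨fun h => h.2, fun h => ⟨conn_ins h0 h, h⟩⟩

def H {d : ℕ} (S C : Finset (Vertex d)) (e : Edge d) : Set (Config d) :=
  {ω | Clus S ω = C} ∩ G S e

open Classical in
theorem H_dep {d : ℕ} {S : Finset (Vertex d)} (h0 : origin d ∈ S) (C : Finset (Vertex d))
    (e : Edge d) : Dep (ins S ∩ tch C) (H S C e) := by
  rintro ω ω' h ⟨hC, hG⟩
  have hC : Clus S ω = C := hC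
  have hm : ∀ x, x ∈ C ↔ Conn (restr (ins S) ω) (origin d) x := by
    intro x; rw [← hC, mem_Clus h0]
  have h1 : ∀ x, Conn (restr (ins S) ω) (origin d) x → Conn (restr (ins S) ω') (origin d) x := by
    intro x hx
    induction hx with
    | refl => exact Relation.ReflTransGen.refl
    | tail hb hs ih =>
      obtain ⟨hadj, he, ho⟩ := step_restr.1 hs
      refine Relation.ReflTransGen.tail ih (step_restr.2 ⟨hadj, he, ?_⟩)
      rw [← ho]
      refine (h _ (Finset.mem_inter.2 ⟨he, (mem_tch_mk hadj).2 (Or.inl ((hm _).2 hb))⟩)).symm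
  have h2 : ∀ x, Conn (restr (ins S) ω') (origin d) x → Conn (restr (ins S) ω) (origin d) x := by
    intro x hx
    induction hx with
    | refl => exact Relation.ReflTransGen.refl
    | tail hb hs ih =>
      obtain ⟨hadj, he, ho⟩ := step_restr.1 hs
      refine Relation.ReflTransGen.tail ih (step_restr.2 ⟨hadj, he, ?_⟩)
      rw [← ho]
      exact (h _ (Finset.mem_inter.2 ⟨he, (mem_tch_mk hadj).2 (Or.inl ((hm _).2 ih))⟩))
  refine ⟨?_, ?_⟩
  · show Clus S ω' = C
    ext x
    rw [mem_Clus h0, hm]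
    exact ⟨h2 x, h1 x⟩
  · obtain ⟨x, y, hx, hy, he, hc⟩ := hG
    exact ⟨x, y, hx, hy, he, h1 x hc⟩

def DD {d : ℕ} (n : ℕ) (C : Finset (Vertex d)) (y : Vertex d) : Set (Config d) :=
  {ω | out (boxF d n) (restr (tch C : Set (Edge d))ᶜ ω) y}

open Classical in
theorem DD_dep {d : ℕ} (n : ℕ) (C : Finset (Vertex d)) (y : Vertex d) :
    Dep (tch (boxF d n) \ tch C) (DD n C y) := by
  intro ω ω' h ho
  refine out_congr ?_ ho
  intro e he
  unfold restr
  split_ifs with hC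
  · exact h e (Finset.mem_sdiff.2 ⟨he, by simpa using hC⟩)
  · rfl

theorem last_exit {d : ℕ} {ω : Config d} {C : Finset (Vertex d)} {x z : Vertex d}
    (hc : Conn ω x z) (hx : x ∈ C) (hz : z ∉ C) :
    ∃ a b, a ∈ C ∧ b ∉ C ∧ step ω a b ∧ Conn (restr (tch C : Set (Edge d))ᶜ ω) b z := by
  have key : (∃ a b, a ∈ C ∧ b ∉ C ∧ step ω a b ∧ Conn (restr (tch C : Set (Edge d))ᶜ ω) b z) ∨
      (x ∉ C ∧ Conn (restr (tch C : Set (Edge d))ᶜ ω) x z) := by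
    clear hx
    induction hc using Relation.ReflTransGen.head_induction_on with
    | refl => exact Or.inr ⟨hz, Relation.ReflTransGen.refl⟩
    | @head a c hs hc ih =>
      rcases ih with ih | ⟨hcC, hcz⟩
      · exact Or.inl ih
      · by_cases ha : a ∈ C
        · exact Or.inl ⟨a, c, ha, hcC, hs, hcz⟩
        · obtain ⟨hadj, ho⟩ := hs
          refine Or.inr ⟨ha, Relation.ReflTransGen.head (step_restr.2 ⟨hadj, ?_, ho⟩) hcz⟩
          have : mkE hadj ∉ tch C := by rw [mem_tch_mk]; tauto
          simpa using this
  rcases key with k | k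
  · exact k
  · exact absurd hx k.1

/-- shift of edges -/
def sh {d : ℕ} (y : Vertex d) (e : Edge d) : Edge d :=
  ⟨Sym2.map (fun x => x + y) e.1, by
    obtain ⟨e, a, b, hab, rfl⟩ := e
    exact ⟨a + y, b + y, by simpa [adj] using hab, rfl⟩⟩

theorem sh_neg {d : ℕ} (y : Vertex d) (e : Edge d) : sh (-y) (sh y e) = e := by
  obtain ⟨e, a, b, hab, rfl⟩ := e
  apply Subtype.ext
  simp [sh]

def shc {d : ℕ} (y : Vertex d) (ω : Config d) : Config d := fun e => ω (sh y e)

theorem shc_conn {d : ℕ} {y : Vertex d} {ω : Config d} {a b : Vertex d} (h : Conn ω a b) :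
    Conn (shc y ω) (a - y) (b - y) := by
  induction h with
  | refl => exact Relation.ReflTransGen.refl
  | @tail b c _ hs ih =>
    obtain ⟨hadj, ho⟩ := hs
    have hadj' : adj (b - y) (c - y) := by simpa [adj] using hadj
    refine Relation.ReflTransGen.tail ih ⟨hadj', ?_⟩
    have : sh y (mkE hadj') = mkE hadj := Subtype.ext (by simp [sh, mkE])
    show ω (sh y (mkE hadj')) = true
    rw [this]; exact ho

theorem shc_meas {d : ℕ} (y : Vertex d) : Measurable (shc y) :=
  measurable_pi_lambda _ fun e => measurable_pi_apply (sh y e)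

theorem shc_bern {d : ℕ} {p : ℝ} {ν : Measure (Config d)} (hν : IsBernoulli d p ν)
    (y : Vertex d) : IsBernoulli d p (ν.map (shc y)) := by
  classical
  have := hν.1
  refine ⟨Measure.isProbabilityMeasure_map (shc_meas y).aemeasurable, fun s f => ?_⟩
  have hms : MeasurableSet {ω : Config d | ∀ e ∈ s, ω e = f e} := by
    have : {ω : Config d | ∀ e ∈ s, ω e = f e} = ⋂ e ∈ s, (fun ω : Config d => ω e) ⁻¹' {f e} := by
      ext ω; simp
    rw [this]
    exact Finset.measurableSet_biInter _
      fun e _ => measurable_pi_apply e (measurableSet_singleton _)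
  rw [Measure.map_apply (shc_meas y) hms]
  have hinj : Function.Injective (sh y) := Function.LeftInverse.injective (sh_neg y)
  have := hν.2 (s.image (sh y)) (fun e => f (sh (-y) e))
  rw [Finset.prod_image hinj.injOn] at this
  simp only [sh_neg] at this
  rw [← this]
  congr 1
  ext ω
  constructor
  · intro h e he
    obtain ⟨e', he', rfl⟩ := Finset.mem_image.1 he
    rw [sh_neg]
    exact h e' he'
  · intro h e he
    have := h (sh y e) (Finset.mem_image_of_mem _ he)
    rw [sh_neg] at this
    exact this

theorem shift_real {d : ℕ} {p : ℝ} {ν : Measure (Config d)} (hp : p ∈ Set.Ioo (0 : ℝ) 1)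
    (hν : IsBernoulli d p ν) {F : Finset (Edge d)} {A : Set (Config d)} (h : Dep F A)
    (y : Vertex d) : ν.real (shc y ⁻¹' A) = ν.real A := by
  rw [h.real hp hν, ← h.real hp (shc_bern hν y), Measure.real, Measure.real,
    Measure.map_apply (shc_meas y) h.meas]

theorem DD_le {d : ℕ} {p : ℝ} {ν : Measure (Config d)} (hp : p ∈ Set.Ioo (0 : ℝ) 1)
    (hν : IsBernoulli d p ν) {n m : ℕ} (hn : m ≤ n) (C : Finset (Vertex d)) {y : Vertex d}
    (hy : y ∈ boxF d m) : ν.real (DD n C y) ≤ ν.real (R d (n - m)) := by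
  have := hν.1
  rw [← shift_real hp hν (R_dep d (n - m)) y]
  refine measureReal_mono ?_
  rintro ω ⟨z, hz, hc⟩
  have h1 := shc_conn (y := y) (hc.mono' restr_le)
  rw [sub_self] at h1
  refine ⟨z - y, ?_, h1⟩
  rw [mem_boxF] at *
  intro h
  apply hz
  intro i
  have h2 := abs_le.1 (h i)
  have h3 := abs_le.1 (hy i)
  simp only [Pi.sub_apply] at h2
  rw [abs_le]
  push_cast [hn] at h2
  constructor <;> linarith

theorem open_dep {d : ℕ} (e : Edge d) : Dep {e} {ω : Config d | ω e = true} := by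
  intro ω ω' h ho
  have := h e (Finset.mem_singleton_self e)
  show ω' e = true
  rw [← this]; exact ho

theorem open_real {d : ℕ} {p : ℝ} {ν : Measure (Config d)} (hp : p ∈ Set.Ioo (0 : ℝ) 1)
    (hν : IsBernoulli d p ν) (e : Edge d) : ν.real {ω : Config d | ω e = true} = p := by
  have := hν.2 {e} (fun _ => true)
  simp at this
  rw [Measure.real, this, ENNReal.toReal_ofReal hp.1.le]

theorem R_cover {d : ℕ} {S : Finset (Vertex d)} (h0 : origin d ∈ S) {n : ℕ}
    (hSn : S ⊆ boxF d n) :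
    R d n ⊆ ⋃ C ∈ S.powerset, ⋃ e ∈ tch S, (H S C e ∩ ({ω | ω e = true} ∩
      {ω | ∃ y ∈ e.1, y ∉ S ∧ ω ∈ DD n C y})) := by
  rintro ω ⟨z, hz, hc⟩
  have hCS : Clus S ω ⊆ S := by
    unfold Clus
    classical
    exact Finset.filter_subset _ _
  have h0C : origin d ∈ Clus S ω := (mem_Clus h0).2 Relation.ReflTransGen.refl
  obtain ⟨a, b, ha, hb, hs, hbz⟩ := last_exit hc h0C (fun h => hz (hSn (hCS h)))
  have hs' := hs
  obtain ⟨hadj, ho⟩ := hs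
  have hbS : b ∉ S := by
    intro hbS
    apply hb
    rw [mem_Clus h0] at *
    exact Relation.ReflTransGen.tail ha (step_restr.2 ⟨hadj, (mem_ins_mk hadj).2
      ⟨conn_ins h0 ha, hbS⟩, ho⟩)
  simp only [Set.mem_iUnion]
  refine ⟨Clus S ω, Finset.mem_powerset.2 hCS, mkE hadj, (mem_tch_mk hadj).2 (Or.inl (hCS ha)),
    ⟨rfl, a, b, hCS ha, hbS, rfl, (mem_Clus h0).1 ha⟩, ho, b, ?_, hbS, z, hz, hbz⟩
  simp [mkE]

theorem piece {d : ℕ} {p : ℝ} {ν : Measure (Config d)} (hp : p ∈ Set.Ioo (0 : ℝ) 1)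
    (hν : IsBernoulli d p ν) {S : Finset (Vertex d)} (h0 : origin d ∈ S) {n m : ℕ}
    (hSm : S ⊆ boxF d m) (hn : m + 1 ≤ n) (C : Finset (Vertex d)) (e : Edge d) :
    ν.real (H S C e ∩ ({ω | ω e = true} ∩ {ω | ∃ y ∈ e.1, y ∉ S ∧ ω ∈ DD n C y})) ≤
      ν.real (H S C e) * (p * ν.real (R d (n - (m + 1)))) := by
  classical
  have := hν.1
  by_cases hH : ∃ ω, ω ∈ H S C e
  · obtain ⟨ω, hC, x, y, hx, hy, he, hc⟩ := hH
    have hC : Clus S ω = C := hC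
    have hxC : x ∈ C := by rw [← hC, mem_Clus h0]; exact hc
    have hadj : adj x y := by
      obtain ⟨e, a, b, hab, rfl⟩ := e
      rcases Sym2.eq_iff.1 he with ⟨rfl, rfl⟩ | ⟨rfl, rfl⟩
      · exact hab
      · exact adj_symm hab
    have hee : mkE hadj = e := Subtype.ext he.symm
    have hsub : {ω : Config d | ∃ y ∈ e.1, y ∉ S ∧ ω ∈ DD n C y} ⊆ DD n C y := by
      rintro ω' ⟨y', hy', hyS, hD⟩
      rw [he, Sym2.mem_iff] at hy'
      rcases hy' with rfl | rfl
      · exact absurd hx hyS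
      · exact hD
    have hyb : y ∈ boxF d (m + 1) := by
      have := hSm hx
      rw [mem_boxF] at *
      intro i
      have h1 := abs_le.1 (this i)
      have h2 := abs_le.1 (adj_le hadj i)
      rw [abs_le]; push_cast
      constructor <;> linarith
    have hetC : e ∈ tch C := by rw [← hee, mem_tch_mk]; exact Or.inl hxC
    have heS : e ∉ ins S := by rw [← hee, mem_ins_mk]; tauto
    have i1 : ν.real ({ω : Config d | ω e = true} ∩ DD n C y) =
        p * ν.real (DD n C y) := by
      rw [indep hp hν (open_dep e) (DD_dep n C y), open_real hp hν]
      rw [Finset.disjoint_singleton_left, Finset.mem_sdiff]; tauto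
    have i2 : ν.real (H S C e ∩ ({ω : Config d | ω e = true} ∩ DD n C y)) =
        ν.real (H S C e) * ν.real ({ω : Config d | ω e = true} ∩ DD n C y) := by
      refine indep hp hν (H_dep h0 C e) (((open_dep e).mono (Finset.subset_union_left
        (s₂ := tch (boxF d n) \ tch C))).inter ((DD_dep n C y).mono Finset.subset_union_right)) ?_
      rw [Finset.disjoint_left]
      intro e' h1 h2
      rw [Finset.mem_inter] at h1
      rw [Finset.mem_union, Finset.mem_singleton, Finset.mem_sdiff] at h2
      rcases h2 with rfl | h2
      · exact heS h1.1
      · exact h2.2 h1.2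
    calc _ ≤ ν.real (H S C e ∩ ({ω : Config d | ω e = true} ∩ DD n C y)) :=
          measureReal_mono (Set.inter_subset_inter_right _ (Set.inter_subset_inter_right _ hsub))
      _ = ν.real (H S C e) * (p * ν.real (DD n C y)) := by rw [i2, i1]
      _ ≤ _ := by
        have := DD_le hp hν hn C hyb
        have := hp.1
        gcongr
  · have : H S C e = ∅ := Set.eq_empty_of_forall_notMem fun ω h => hH ⟨ω, h⟩
    simp [this]

theorem R_rec {d : ℕ} {p : ℝ} {ν : Measure (Config d)} (hp : p ∈ Set.Ioo (0 : ℝ) 1)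
    (hν : IsBernoulli d p ν) {S : Finset (Vertex d)} (h0 : origin d ∈ S) {n m : ℕ}
    (hSm : S ⊆ boxF d m) (hn : m + 1 ≤ n) :
    ν.real (R d n) ≤ phi p S * ν.real (R d (n - (m + 1))) := by
  classical
  have := hν.1
  have hSn : S ⊆ boxF d n := by
    intro x hx
    have := hSm hx
    rw [mem_boxF] at *
    intro i
    have h1 := this i
    have : (m : ℤ) ≤ n := by exact_mod_cast (by omega : m ≤ n)
    linarith
  have h1 := measureReal_mono (R_cover h0 hSn) (measure_ne_top ν _)
  refine h1.trans ((measureReal_biUnion_finset_le _ _).trans ?_)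
  refine (Finset.sum_le_sum fun C _ => (measureReal_biUnion_finset_le _ _).trans
    (Finset.sum_le_sum fun e _ => piece hp hν h0 hSm hn C e)).trans ?_
  rw [Finset.sum_comm]
  simp_rw [← Finset.sum_mul]
  rw [phi, mul_comm p (∑ e ∈ tch S, Pf p (ins S) (G S e)), mul_assoc]
  have hpp := hp.1
  gcongr with e he
  rw [← (G_dep S e).real hp hν, ← measureReal_biUnion_finset]
  · refine measureReal_mono ?_
    intro ω hω
    simp only [Set.mem_iUnion] at hω
    obtain ⟨C, _, h⟩ := hω
    exact h.2
  · intro C _ C' _ hne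
    rw [Function.onFun, Set.disjoint_left]
    rintro ω ⟨h1, _⟩ ⟨h2, _⟩
    exact hne (Eq.trans (Eq.symm h1) h2)
  · exact fun C _ => (H_dep h0 C e).meas

theorem R_anti {d : ℕ} : Antitone (R d) := by
  rintro n m hnm ω ⟨z, hz, hc⟩
  refine ⟨z, fun h => hz ?_, hc⟩
  rw [mem_boxF] at *
  intro i
  have := h i
  have : (n : ℤ) ≤ m := by exact_mod_cast hnm
  linarith

theorem R_zero {d : ℕ} {p : ℝ} {ν : Measure (Config d)} (hp : p ∈ Set.Ioo (0 : ℝ) 1)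
    (hν : IsBernoulli d p ν) : ν.real (R d 0) < 1 := by
  classical
  have := hν.1
  have h1 : R d 0 ⊆ (cyl (tch (boxF d 0)) ∅)ᶜ := by
    intro ω ho hc
    have h2 : out (boxF d 0) (cfg ∅) (origin d) := out_congr hc ho
    obtain ⟨z, hz, hcn⟩ := h2
    rcases Relation.ReflTransGen.cases_head hcn with h | ⟨c, hs, _⟩
    · apply hz; rw [← h, mem_boxF]; intro i; simp [origin]
    · obtain ⟨_, h⟩ := hs
      simp [cfg] at h
  have h3 := measureReal_mono h1 (measure_ne_top ν _)
  rw [probReal_compl_eq_one_sub (cyl_meas _ _), cyl_real hp hν] at h3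
  have h4 : 0 < wt p (tch (boxF d 0)) ∅ := by
    refine Finset.prod_pos fun e _ => ?_
    have := hp.2
    simp; linarith
  linarith

theorem exp_decay {d : ℕ} {p : ℝ} {ν : Measure (Config d)} (hp : p ∈ Set.Ioo (0 : ℝ) 1)
    (hν : IsBernoulli d p ν) {S : Finset (Vertex d)} (h0 : origin d ∈ S) (hphi : phi p S < 1) :
    ∃ c : ℝ, 0 < c ∧ ∀ n : ℕ, ν.real (R d n) ≤ Real.exp (-c * (n + 1 : ℕ)) := by
  have := hν.1
  obtain ⟨m, hm⟩ : ∃ m, S ⊆ boxF d m := by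
    refine ⟨∑ x ∈ S, ∑ i, (x i).natAbs, fun x hx => ?_⟩
    rw [mem_boxF]
    intro i
    have h1 := Finset.single_le_sum (f := fun i => (x i).natAbs) (fun _ _ => Nat.zero_le _)
      (Finset.mem_univ i)
    have h2 := Finset.single_le_sum (f := fun x : Vertex d => ∑ i, (x i).natAbs)
      (fun _ _ => Nat.zero_le _) hx
    have h3 := h1.trans h2
    rw [Int.abs_eq_natAbs]
    exact_mod_cast h3
  set ρ : ℝ := max (max (phi p S) (ν.real (R d 0))) (1 / 2) with hρ
  have hρ0 : 0 < ρ := lt_of_lt_of_le (by norm_num) (le_max_right _ _)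
  have hρ1 : ρ < 1 := max_lt (max_lt hphi (R_zero hp hν)) (by norm_num)
  have hL : (0 : ℝ) < m + 1 := by positivity
  have hc : 0 < -Real.log ρ / (m + 1) := div_pos (neg_pos.2 (Real.log_neg hρ0 hρ1)) hL
  refine ⟨-Real.log ρ / (m + 1), hc, fun n => ?_⟩
  set c := -Real.log ρ / (m + 1) with hcdef
  have hρe : ρ = Real.exp (-c * (m + 1)) := by
    have : -c * (m + 1) = Real.log ρ := by rw [hcdef]; field_simp
    rw [this, Real.exp_log hρ0]
  induction n using Nat.strong_induction_on with
  | _ n ih =>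
    by_cases hn : m + 1 ≤ n
    · have h1 := R_rec hp hν h0 hm hn
      have h2 := ih (n - (m + 1)) (by omega)
      have h3 : phi p S ≤ ρ := (le_max_left _ _).trans (le_max_left _ _)
      calc ν.real (R d n) ≤ phi p S * ν.real (R d (n - (m + 1))) := h1
        _ ≤ ρ * Real.exp (-c * ((n - (m + 1)) + 1 : ℕ)) := by gcongr
        _ = _ := by
          rw [hρe, ← Real.exp_add]
          congr 1
          push_cast [hn]
          ring
    · have h1 : ν.real (R d n) ≤ ν.real (R d 0) := measureReal_mono (R_anti (Nat.zero_le n))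
      have h2 : ν.real (R d 0) ≤ ρ := (le_max_right _ _).trans (le_max_left _ _)
      refine h1.trans (h2.trans ?_)
      rw [hρe, Real.exp_le_exp]
      have : (n : ℝ) + 1 ≤ m + 1 := by exact_mod_cast (by omega : n + 1 ≤ m + 1)
      push_cast
      nlinarith

theorem boundary_sub {d n : ℕ} : ZeroToBoundary d (n + 1) ⊆ R d n := by
  rintro ω ⟨y, ⟨hy, w, hadj, hw⟩, hc⟩
  refine ⟨y, fun h => hw ?_, hc⟩
  rw [mem_boxF] at h
  intro i
  have h1 := abs_le.1 (h i)
  have h2 := abs_le.1 (adj_le hadj i)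
  rw [abs_le]; push_cast
  constructor <;> linarith

theorem inter_sub {d : ℕ} : ⋂ n, R d n ⊆ ZeroToInfinity d := by
  intro ω hω hfin
  rw [Set.mem_iInter] at hω
  have hfin : (cluster ω (origin d)).Finite := hfin
  obtain ⟨z, hz, hc⟩ := hω (∑ x ∈ hfin.toFinset, ∑ i, (x i).natAbs)
  apply hz
  rw [mem_boxF]
  intro i
  have h1 := Finset.single_le_sum (f := fun i => (z i).natAbs) (fun _ _ => Nat.zero_le _)
    (Finset.mem_univ i)
  have h2 := Finset.single_le_sum (f := fun x : Vertex d => ∑ i, (x i).natAbs)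
    (fun _ _ => Nat.zero_le _) (hfin.mem_toFinset.2 hc)
  have h3 := h1.trans h2
  rw [Int.abs_eq_natAbs]
  exact_mod_cast h3

/-- Sharpness of the phase transition (Duminil-Copin–Tassion): for every `d ≥ 2` and every
`p ∈ (0,1)` with `p < p_c(ℤ^d)`, there exists `c = c(p) > 0` such that
`ℙ_p[0 ↔ ∂Λ_n] ≤ exp(−c·n)` for all `n ≥ 1`. -/
theorem subcritical_sharpness
    (d : ℕ) (hd : 2 ≤ d)
    (μ : ℝ → Measure (Config d))
    (hμ : ∀ p ∈ Set.Ioo (0 : ℝ) 1, IsBernoulli d p (μ p))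
    (p : ℝ) (hp : p ∈ Set.Ioo (0 : ℝ) 1)
    (hsub : p < sSup {q : ℝ | q ∈ Set.Ioo (0 : ℝ) 1 ∧ μ q (ZeroToInfinity d) = 0}) :
    ∃ c : ℝ, 0 < c ∧ ∀ n : ℕ, 1 ≤ n →
      μ p (ZeroToBoundary d n) ≤ ENNReal.ofReal (Real.exp (-c * n)) := by
  have hne : {q : ℝ | q ∈ Set.Ioo (0 : ℝ) 1 ∧ μ q (ZeroToInfinity d) = 0}.Nonempty := by
    by_contra h
    rw [Set.not_nonempty_iff_eq_empty] at h
    rw [h, Real.sSup_empty] at hsub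
    exact absurd hp.1 (not_lt.2 hsub.le)
  obtain ⟨q, ⟨hq, hθ⟩, hpq⟩ := exists_lt_of_lt_csSup hne hsub
  have hex : ∃ S : Finset (Vertex d), origin d ∈ S ∧ phi p S < 1 := by
    by_contra hcon
    push Not at hcon
    have := (hμ q hq).1
    have hlow := fun n => R_lower (n := n) hμ hp hq hpq hcon
    have hlim := tendsto_measure_iInter_atTop (μ := μ q)
      (fun n => (R_dep d n).meas.nullMeasurableSet) R_anti ⟨0, measure_ne_top _ _⟩
    rw [measure_mono_null inter_sub hθ] at hlim
    have hlim' := (ENNReal.tendsto_toReal ENNReal.zero_ne_top).comp hlim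
    have := ge_of_tendsto' hlim' hlow
    have h1 : Real.exp (p - q) < 1 := Real.exp_lt_one_iff.2 (by linarith)
    simp at this
    linarith
  obtain ⟨S, h0, hS⟩ := hex
  obtain ⟨c, hc, h⟩ := exp_decay hp (hμ p hp) h0 hS
  have := (hμ p hp).1
  refine ⟨c, hc, fun n hn => ?_⟩
  obtain ⟨k, rfl⟩ : ∃ k, n = k + 1 := ⟨n - 1, by omega⟩
  refine (measure_mono boundary_sub).trans ?_
  rw [← ENNReal.ofReal_toReal (measure_ne_top (μ p) (R d k))]
  exact ENNReal.ofReal_le_ofReal (h k)
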